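/- Let S ⊆ I1 with |S| = k (0 ≤ k < K) and set v = Σ_{l∈I1∖S} A_l x̃_l. Then max_{l∈I1} ‖A_l^T v‖_2 ≥ (1 − (d−1)ν − (K−k−1)dμ_B) · max_{l∈I1∖S} ‖x̃_l‖_2. -/

import Mathlib

/- Setting: a measurement matrix `A ∈ ℝ^{m×n}` with `n = L·d`, partitioned into `L` column
blocks of size `m×d`; columns are indexed by pairs `(l, j)` (block `l`, position `j`). -/

noncomputable section

open Finset Matrix

/-- Euclidean (ℓ₂) norm of a finitely indexed real vector. -/
def e2norm {ι : Type*} [Fintype ι] (v : ι → ℝ) : ℝ := Real.sqrt (∑ i, v i ^ 2)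

/-- Euclidean inner (dot) product of two real vectors. -/
def dotp {ι : Type*} [Fintype ι] (u v : ι → ℝ) : ℝ := ∑ i, u i * v i

/-- The `(l, j)` column of the block matrix `A` (block `l`, position `j` inside the block). -/
def acol {m L d : ℕ} (A : Matrix (Fin m) (Fin L × Fin d) ℝ) (l : Fin L) (j : Fin d) :
    Fin m → ℝ :=
  fun i => A i (l, j)

/-- `A_lᵀ v` : correlation of the `l`-th block of `A` with a vector `v ∈ ℝ^m`. -/
def blkT {m L d : ℕ} (A : Matrix (Fin m) (Fin L × Fin d) ℝ) (l : Fin L) (v : Fin m → ℝ) :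
    Fin d → ℝ :=
  fun j => dotp (acol A l j) v

/-- Spectral norm (largest singular value) `ρ(X)` of a real matrix, as the supremum of
`‖Xu‖₂ / ‖u‖₂` over nonzero `u`. -/
def specNorm {p q : ℕ} (X : Matrix (Fin p) (Fin q) ℝ) : ℝ :=
  ⨆ u : {u : Fin q → ℝ // u ≠ 0}, e2norm (X *ᵥ u.1) / e2norm u.1

/-- The `d × d` cross-Gram matrix `A_iᵀ A_j` of two blocks of `A`. -/
def bgram {m L d : ℕ} (A : Matrix (Fin m) (Fin L × Fin d) ℝ) (i j : Fin L) :
    Matrix (Fin d) (Fin d) ℝ :=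
  fun a b => dotp (acol A i a) (acol A j b)

/-- Block-coherence `μ_B = max_{i ≠ j} (1/d) ρ(A_iᵀ A_j)`. -/
def blockCoh {m L d : ℕ} (A : Matrix (Fin m) (Fin L × Fin d) ℝ) : ℝ :=
  ⨆ p : {p : Fin L × Fin L // p.1 ≠ p.2},
    (1 / (d : ℝ)) * specNorm (bgram A p.1.1 p.1.2)

/-- Sub-coherence `ν`: the maximum of `|a_iᵀ a_j|` over pairs of distinct columns lying in the
same block of `A`. -/
def subCoh {m L d : ℕ} (A : Matrix (Fin m) (Fin L × Fin d) ℝ) : ℝ :=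
  ⨆ t : {t : Fin L × Fin d × Fin d // t.2.1 ≠ t.2.2},
    |dotp (acol A t.1.1 t.1.2.1) (acol A t.1.1 t.1.2.2)|

lemma e2norm_nonneg' {ι : Type*} [Fintype ι] (v : ι → ℝ) : 0 ≤ e2norm v := Real.sqrt_nonneg _

lemma e2norm_sq' {ι : Type*} [Fintype ι] (v : ι → ℝ) : e2norm v ^ 2 = ∑ i, v i ^ 2 :=
  Real.sq_sqrt (Finset.sum_nonneg fun _ _ => sq_nonneg _)

lemma abs_dotp_le' {ι : Type*} [Fintype ι] (u v : ι → ℝ) :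
    |dotp u v| ≤ e2norm u * e2norm v := by
  apply abs_le_of_sq_le_sq _ (mul_nonneg (e2norm_nonneg' u) (e2norm_nonneg' v))
  rw [mul_pow, e2norm_sq', e2norm_sq']
  exact Finset.sum_mul_sq_le_sq_mul_sq _ _ _

lemma specNorm_bdd' {p q : ℕ} (X : Matrix (Fin p) (Fin q) ℝ) :
    BddAbove (Set.range fun u : {u : Fin q → ℝ // u ≠ 0} =>
      e2norm (X *ᵥ u.1) / e2norm u.1) := by
  have hX : 0 ≤ ∑ i, ∑ j, X i j ^ 2 :=
    Finset.sum_nonneg fun _ _ => Finset.sum_nonneg fun _ _ => sq_nonneg _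
  refine ⟨Real.sqrt (∑ i, ∑ j, X i j ^ 2), ?_⟩
  rintro _ ⟨u, rfl⟩
  refine div_le_of_le_mul₀ (e2norm_nonneg' _) (Real.sqrt_nonneg _) ?_
  refine le_trans (le_abs_self _) <| abs_le_of_sq_le_sq ?_ (mul_nonneg (Real.sqrt_nonneg _) (e2norm_nonneg' _))
  rw [mul_pow, e2norm_sq', e2norm_sq',
    Real.sq_sqrt hX,
    Finset.sum_mul]
  exact Finset.sum_le_sum fun i _ =>
    Finset.sum_mul_sq_le_sq_mul_sq Finset.univ (fun j => X i j) u.1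

lemma specNorm_le' {p q : ℕ} (X : Matrix (Fin p) (Fin q) ℝ) (u : Fin q → ℝ) :
    e2norm (X *ᵥ u) ≤ specNorm X * e2norm u := by
  by_cases hu : u = 0
  · subst hu
    simp [e2norm]
  · have h := le_ciSup (specNorm_bdd' X) ⟨u, hu⟩
    have hpos : 0 < e2norm u := by
      apply Real.sqrt_pos.2
      obtain ⟨i, hi⟩ := Function.ne_iff.1 hu
      exact Finset.sum_pos' (fun _ _ => sq_nonneg _) ⟨i, Finset.mem_univ _, by
        have : u i ≠ 0 := hi
        positivity⟩
    exact (div_le_iff₀ hpos).1 h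

lemma specNorm_le_coh' {m L d : ℕ} (hd : 0 < d) (A : Matrix (Fin m) (Fin L × Fin d) ℝ)
    (i j : Fin L) (hij : i ≠ j) : specNorm (bgram A i j) ≤ d * blockCoh A := by
  have h := le_ciSup (f := fun p : {p : Fin L × Fin L // p.1 ≠ p.2} =>
    (1 / (d : ℝ)) * specNorm (bgram A p.1.1 p.1.2)) (Set.finite_range _).bddAbove ⟨(i, j), hij⟩
  have hd' : (0 : ℝ) < d := by exact_mod_cast hd
  have h2 : (1 / (d : ℝ)) * specNorm (bgram A i j) ≤ blockCoh A := h
  calc specNorm (bgram A i j) = d * ((1 / (d : ℝ)) * specNorm (bgram A i j)) := by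
        field_simp
    _ ≤ _ := mul_le_mul_of_nonneg_left h2 hd'.le

lemma subCoh_le' {m L d : ℕ} (A : Matrix (Fin m) (Fin L × Fin d) ℝ)
    (l : Fin L) (a b : Fin d) (hab : a ≠ b) : |bgram A l l a b| ≤ subCoh A :=
  le_ciSup (f := fun t : {t : Fin L × Fin d × Fin d // t.2.1 ≠ t.2.2} =>
    |dotp (acol A t.1.1 t.1.2.1) (acol A t.1.1 t.1.2.2)|)
    (Set.finite_range _).bddAbove ⟨(l, a, b), hab⟩

lemma subCoh_nonneg' {m L d : ℕ} (A : Matrix (Fin m) (Fin L × Fin d) ℝ) : 0 ≤ subCoh A :=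
  Real.iSup_nonneg fun _ => abs_nonneg _

lemma blockCoh_nonneg' {m L d : ℕ} (A : Matrix (Fin m) (Fin L × Fin d) ℝ) : 0 ≤ blockCoh A :=
  Real.iSup_nonneg fun _ => mul_nonneg (by positivity)
    (Real.iSup_nonneg fun _ => div_nonneg (e2norm_nonneg' _) (e2norm_nonneg' _))

lemma diag_bound' {m L d : ℕ} (A : Matrix (Fin m) (Fin L × Fin d) ℝ)
    (hA : ∀ l j, e2norm (acol A l j) = 1) (l : Fin L) (u : Fin d → ℝ) :
    (1 - ((d : ℝ) - 1) * subCoh A) * e2norm u ^ 2 ≤ dotp u (bgram A l l *ᵥ u) := by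
  have hdiag : ∀ a, bgram A l l a a = 1 := by
    intro a
    have h := e2norm_sq' (acol A l a)
    rw [hA] at h
    simp only [bgram, dotp]
    rw [← one_pow 2, h]
    exact Finset.sum_congr rfl fun _ _ => by ring
  have hterm : ∀ a b, (if a = b then (1 + subCoh A) * u a ^ 2 else 0)
      - subCoh A * (|u a| * |u b|) ≤ u a * (bgram A l l a b * u b) := by
    intro a b
    split_ifs with hab
    · subst hab
      rw [hdiag, abs_mul_abs_self]
      nlinarith
    · have h1 := subCoh_le' A l a b hab
      have h2 : |u a * (bgram A l l a b * u b)| ≤ subCoh A * (|u a| * |u b|) := by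
        rw [abs_mul, abs_mul]
        nlinarith [mul_nonneg (abs_nonneg (u a)) (abs_nonneg (u b)),
          mul_le_mul_of_nonneg_right h1 (mul_nonneg (abs_nonneg (u a)) (abs_nonneg (u b)))]
      linarith [neg_abs_le (u a * (bgram A l l a b * u b))]
  have hsum := Finset.sum_le_sum fun a (_ : a ∈ (Finset.univ : Finset (Fin d))) =>
    Finset.sum_le_sum fun b (_ : b ∈ (Finset.univ : Finset (Fin d))) => hterm a b
  have hR : dotp u (bgram A l l *ᵥ u) = ∑ a, ∑ b, u a * (bgram A l l a b * u b) := by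
    simp only [dotp, Matrix.mulVec, dotProduct, Finset.mul_sum]
  have hL : ∑ a : Fin d, ∑ b : Fin d, ((if a = b then (1 + subCoh A) * u a ^ 2 else 0)
      - subCoh A * (|u a| * |u b|))
      = (1 + subCoh A) * e2norm u ^ 2 - subCoh A * (∑ a, |u a|) ^ 2 := by
    simp only [Finset.sum_sub_distrib, Finset.sum_ite_eq, Finset.mem_univ, if_true,
      ← Finset.mul_sum, e2norm_sq']
    rw [sq (∑ a, |u a|), Finset.sum_mul_sum]
    simp only [Finset.mul_sum]
  have hcs : (∑ a, |u a|) ^ 2 ≤ d * e2norm u ^ 2 := by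
    have := sq_sum_le_card_mul_sum_sq (s := (Finset.univ : Finset (Fin d))) (f := fun a => |u a|)
    simpa [e2norm_sq'] using this
  rw [hR]
  rw [hL] at hsum
  nlinarith [mul_le_mul_of_nonneg_left hcs (subCoh_nonneg' A)]

/-- **Eq. (29) of the paper.**  For `S ⊆ I1` with `|S| = k < K = |I1|` and
`v = Σ_{l ∈ I1∖S} A_l x̃_l`,
`max_{l ∈ I1} ‖A_lᵀ v‖₂ ≥ (1 - (d-1)ν - (K-k-1)dμ_B) · max_{l ∈ I1∖S} ‖x̃_l‖₂`. -/
theorem stmt6 {m L d K k : ℕ}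
    (hm : m < L * d) (hd : 0 < d)
    (A : Matrix (Fin m) (Fin L × Fin d) ℝ)
    (hA : ∀ l j, e2norm (acol A l j) = 1)
    (μB ν : ℝ) (hμB : μB = blockCoh A) (hν : ν = subCoh A)
    (I1 : Finset (Fin L)) (hcard : I1.card = K) (hKL : K < L)
    (S : Finset (Fin L)) (hS : S ⊆ I1) (hSk : S.card = k) (hk : k < K)
    (xt : Fin L → Fin d → ℝ)
    (v : Fin m → ℝ) (hv : v = fun i => ∑ l ∈ I1 \ S, ∑ j, A i (l, j) * xt l j) :
    (1 - ((d : ℝ) - 1) * ν - ((K : ℝ) - (k : ℝ) - 1) * d * μB) *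
        (⨆ l : {l : Fin L // l ∈ I1 \ S}, e2norm (xt l.1)) ≤
      ⨆ l : {l : Fin L // l ∈ I1}, e2norm (blkT A l.1 v) := by
  subst hμB hν
  have hne : (I1 \ S).Nonempty := by
    rw [← Finset.card_pos, Finset.card_sdiff_of_subset hS]
    omega
  obtain ⟨l0, hl0, hmax⟩ := Finset.exists_max_image (I1 \ S) (fun l => e2norm (xt l)) hne
  have hsup : (⨆ l : {l : Fin L // l ∈ I1 \ S}, e2norm (xt l.1)) = e2norm (xt l0) := by
    haveI : Nonempty {l : Fin L // l ∈ I1 \ S} := ⟨⟨l0, hl0⟩⟩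
    apply le_antisymm
    · exact ciSup_le fun l => hmax l.1 l.2
    · exact le_ciSup (f := fun l : {l : Fin L // l ∈ I1 \ S} => e2norm (xt l.1))
        (Set.finite_range _).bddAbove ⟨l0, hl0⟩
  rw [hsup]
  have hl0' : l0 ∈ I1 := (Finset.mem_sdiff.1 hl0).1
  have hge : e2norm (blkT A l0 v) ≤ ⨆ l : {l : Fin L // l ∈ I1}, e2norm (blkT A l.1 v) :=
    le_ciSup (f := fun l : {l : Fin L // l ∈ I1} => e2norm (blkT A l.1 v))
        (Set.finite_range _).bddAbove ⟨l0, hl0'⟩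
  refine le_trans ?_ hge
  have hexp : dotp (xt l0) (blkT A l0 v)
      = ∑ l ∈ I1 \ S, dotp (xt l0) (bgram A l0 l *ᵥ xt l) := by
    have hb : ∀ a, blkT A l0 v a = ∑ l ∈ I1 \ S, (bgram A l0 l *ᵥ xt l) a := by
      intro a
      simp only [blkT, dotp, hv, Matrix.mulVec, dotProduct, bgram, acol, Finset.mul_sum,
        Finset.sum_mul]
      rw [Finset.sum_comm]
      refine Finset.sum_congr rfl fun l _ => ?_
      rw [Finset.sum_comm]
      exact Finset.sum_congr rfl fun _ _ => Finset.sum_congr rfl fun _ _ => by ring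
    simp only [dotp, hb, Finset.mul_sum]
    rw [Finset.sum_comm]
  rw [← Finset.add_sum_erase _ _ hl0] at hexp
  have hoff : ∀ l ∈ (I1 \ S).erase l0, -(d * blockCoh A * e2norm (xt l0) ^ 2)
      ≤ dotp (xt l0) (bgram A l0 l *ᵥ xt l) := by
    intro l hl
    obtain ⟨hne', hl'⟩ := Finset.mem_erase.1 hl
    have h1 := abs_dotp_le' (xt l0) (bgram A l0 l *ᵥ xt l)
    have h2 := specNorm_le' (bgram A l0 l) (xt l)
    have h3 := specNorm_le_coh' hd A l0 l hne'.symm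
    have h0 : 0 ≤ (d : ℝ) * blockCoh A := mul_nonneg (by positivity) (blockCoh_nonneg' A)
    have h4 : specNorm (bgram A l0 l) * e2norm (xt l) ≤ d * blockCoh A * e2norm (xt l0) :=
      mul_le_mul h3 (hmax l hl') (e2norm_nonneg' _) h0
    have h5 := mul_le_mul_of_nonneg_left (h2.trans h4) (e2norm_nonneg' (xt l0))
    have h6 := neg_abs_le (dotp (xt l0) (bgram A l0 l *ᵥ xt l))
    nlinarith
  have hoffs := Finset.card_nsmul_le_sum _ _ _ hoff
  have hc : (((I1 \ S).erase l0).card : ℝ) = (K : ℝ) - k - 1 := by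
    rw [Finset.card_erase_of_mem hl0, Finset.card_sdiff_of_subset hS, hcard, hSk,
      Nat.cast_sub (by omega), Nat.cast_sub hk.le]
    simp
  rw [nsmul_eq_mul, hc] at hoffs
  have hdg := diag_bound' A hA l0 (xt l0)
  have hcs := (le_abs_self _).trans (abs_dotp_le' (xt l0) (blkT A l0 v))
  rcases (e2norm_nonneg' (xt l0)).eq_or_lt with h0 | hpos
  · rw [← h0, mul_zero]
    exact e2norm_nonneg' _
  · refine le_of_mul_le_mul_left ?_ hpos
    nlinarith
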